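/- Let d ≥ 1, a ∈ ℝ, β > 0, and let r be an integer with r > max(0, −a). Let η be a distribution on ℝ^d and x ∈ ℝ^d such that |η(φ_x^λ)| ≤ C λ^a for all φ ∈ B_r and λ ∈ (0,1]. Fix a multiindex k, and let (K_n)_{n≥0} be smooth functions on ℝ^d, each supported in the ball of radius 2^{−n} about the origin, satisfying sup_x |D^{k'} K_n(x)| ≤ C̄ 2^{n(d−β+|k'|)} for every multiindex k' with |k'| ≤ |k| + r. Then there is a constant C'' depending only on d, r, β and |k| such that |η(D^k K_n(x−·))| ≤ C C̄ C'' 2^{(|k|−β−a)n} for every n ≥ 0, where D^k K_n(x−·) denotes the test function y ↦ (D^k K_n)(x−y). In particular, whenever |k| < β + a, the series Σ_{n≥0} η(D^k K_n(x−·)) converges absolutely. -/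

import Mathlib

/-!
Fix `n` and put `l = 2⁻ⁿ`, `M = d ^ r * Cbar * 2 ^ (n (|k| - β))`. The test function
`y ↦ D^k K_n (x - y)` equals `M • scal φ x l` for `φ z = M⁻¹ * l ^ d * D^k K_n (-l z)`. The support
assumption puts `φ` in the unit ball, and each derivative of order `i ≤ r` of `φ` gains a factor
`l ^ i` that compensates exactly the growth `2 ^ (n i)` of the derivatives of the kernel, so
`φ ∈ B_r` and the assumption on `η` gives the bound with `C'' = d ^ r`.

The hypotheses control partial derivatives while `B_r` is defined by norms of
`iteratedFDeriv`; `norm_iteratedFDeriv_Dk_le` passes from the former to the latter, using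
`pderiv1_Dk`, i.e. the symmetry of second derivatives.
-/

open MeasureTheory Metric Set Filter

noncomputable section

/-- Euclidean space `ℝ^d`. -/
abbrev Rd (d : ℕ) := EuclideanSpace ℝ (Fin d)

/-- The rescaled and recentred test function `φ_x^λ (y) = λ^{-d} φ(λ⁻¹(y-x))`. -/
def scal {d : ℕ} (φ : Rd d → ℝ) (x : Rd d) (l : ℝ) : Rd d → ℝ :=
  fun y => (l ^ d)⁻¹ * φ (l⁻¹ • (y - x))

/-- The set `B_r` of `C^r` test functions supported in the unit ball with `C^r` norm at most 1. -/
def Br (d r : ℕ) : Set (Rd d → ℝ) :=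
  {φ | ContDiff ℝ (r : ℕ∞) φ ∧ tsupport φ ⊆ closedBall (0 : Rd d) 1 ∧
    ∀ i ≤ r, ∀ y, ‖iteratedFDeriv ℝ i φ y‖ ≤ 1}

/-- A smooth compactly supported function. -/
def IsTestFunction {d : ℕ} (f : Rd d → ℝ) : Prop :=
  ContDiff ℝ (⊤ : ℕ∞) f ∧ HasCompactSupport f

/-- The local continuity estimate making a linear functional on functions a distribution:
on every compact set it is bounded by some `C^k` norm of the test function. -/
def IsDistribution {d : ℕ} (u : (Rd d → ℝ) →ₗ[ℝ] ℝ) : Prop :=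
  ∀ K : Set (Rd d), IsCompact K → ∃ C : ℝ, ∃ k : ℕ, ∀ f : Rd d → ℝ,
    IsTestFunction f → tsupport f ⊆ K → ∀ B : ℝ,
      (∀ i ≤ k, ∀ y, ‖iteratedFDeriv ℝ i f y‖ ≤ B) → |u f| ≤ C * B

/-- Total weight `|k|` of a multiindex. -/
def wt {d : ℕ} (k : Fin d → ℕ) : ℕ := ∑ j, k j

/-- Factorial `k!` of a multiindex. -/
def mfac {d : ℕ} (k : Fin d → ℕ) : ℕ := ∏ j, (k j).factorial

/-- The monomial `x^k = ∏_j x_j^{k_j}`. -/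
def mono {d : ℕ} (k : Fin d → ℕ) (x : Rd d) : ℝ := ∏ j, (x j) ^ (k j)

/-- Partial derivative in the `j`-th coordinate direction. -/
def pderiv1 {d : ℕ} (j : Fin d) (f : Rd d → ℝ) : Rd d → ℝ :=
  fun x => fderiv ℝ f x (EuclideanSpace.single j (1 : ℝ))

/-- Iterated partial derivative in the `j`-th coordinate direction. -/
def pderivPow {d : ℕ} (j : Fin d) : ℕ → (Rd d → ℝ) → Rd d → ℝ
  | 0 => fun f => f
  | n + 1 => fun f => pderiv1 j (pderivPow j n f)

/-- The multiindex partial derivative `D^k f`. -/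
def Dk {d : ℕ} (k : Fin d → ℕ) (f : Rd d → ℝ) : Rd d → ℝ :=
  ((List.ofFn fun j : Fin d => pderivPow j (k j)).foldr (· ∘ ·) id) f

theorem contDiff_pderiv1 {d : ℕ} (j : Fin d) {f : Rd d → ℝ} (hf : ContDiff ℝ (⊤ : ℕ∞) f) :
    ContDiff ℝ (⊤ : ℕ∞) (pderiv1 j f) :=
  (hf.fderiv_right (m := (⊤ : ℕ∞)) (by exact_mod_cast le_top)).clm_apply contDiff_const

theorem contDiff_pderivPow {d : ℕ} (j : Fin d) (n : ℕ) {f : Rd d → ℝ}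
    (hf : ContDiff ℝ (⊤ : ℕ∞) f) : ContDiff ℝ (⊤ : ℕ∞) (pderivPow j n f) := by
  induction n with
  | zero => exact hf
  | succ n ih => exact contDiff_pderiv1 j ih

theorem tsupport_pderiv1 {d : ℕ} (j : Fin d) (f : Rd d → ℝ) :
    tsupport (pderiv1 j f) ⊆ tsupport f := by
  refine (closure_mono fun x hx => ?_).trans (tsupport_fderiv_subset ℝ (f := f))
  intro h
  apply hx
  simp [pderiv1, h]

theorem tsupport_pderivPow {d : ℕ} (j : Fin d) (n : ℕ) (f : Rd d → ℝ) :
    tsupport (pderivPow j n f) ⊆ tsupport f := by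
  induction n with
  | zero => exact subset_rfl
  | succ n ih => exact (tsupport_pderiv1 j _).trans ih

theorem pderiv1_comm {d : ℕ} (i j : Fin d) {f : Rd d → ℝ} (hf : ContDiff ℝ (⊤ : ℕ∞) f) :
    pderiv1 i (pderiv1 j f) = pderiv1 j (pderiv1 i f) := by
  funext x
  have hd : DifferentiableAt ℝ (fderiv ℝ f) x :=
    ((hf.fderiv_right (m := (⊤ : ℕ∞)) (by exact_mod_cast le_top)).differentiable
      (by simp)) x
  have hs : IsSymmSndFDerivAt ℝ f x :=
    hf.contDiffAt.isSymmSndFDerivAt (by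
      simp only [minSmoothness_of_isRCLikeNormedField]
      exact WithTop.coe_le_coe.2 (le_top : (2 : ℕ∞) ≤ ⊤))
  have key : ∀ a b : Fin d, pderiv1 a (pderiv1 b f) x =
      fderiv ℝ (fderiv ℝ f) x (EuclideanSpace.single a 1) (EuclideanSpace.single b 1) := by
    intro a b
    unfold pderiv1
    rw [fderiv_clm_apply hd (differentiableAt_const _)]
    simp
  rw [key, key, hs.eq]

theorem pderiv1_pderivPow_comm {d : ℕ} (i j : Fin d) (n : ℕ) {f : Rd d → ℝ}
    (hf : ContDiff ℝ (⊤ : ℕ∞) f) :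
    pderiv1 i (pderivPow j n f) = pderivPow j n (pderiv1 i f) := by
  induction n with
  | zero => rfl
  | succ n ih =>
    simp only [pderivPow]
    rw [pderiv1_comm i j (contDiff_pderivPow j n hf), ih]

/-- The partial derivative `D^k` restricted to the coordinates in the list `L`, composed in the
order of `L`. -/
def DkList {d : ℕ} (L : List (Fin d)) (k : Fin d → ℕ) (f : Rd d → ℝ) : Rd d → ℝ :=
  ((L.map fun j : Fin d => pderivPow j (k j)).foldr (· ∘ ·) id) f

theorem Dk_eq_DkList {d : ℕ} (k : Fin d → ℕ) (f : Rd d → ℝ) :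
    Dk k f = DkList (List.finRange d) k f := by
  rw [Dk, DkList, List.ofFn_eq_map]

theorem DkList_cons {d : ℕ} (j : Fin d) (L : List (Fin d)) (k : Fin d → ℕ) (f : Rd d → ℝ) :
    DkList (j :: L) k f = pderivPow j (k j) (DkList L k f) := rfl

theorem contDiff_DkList {d : ℕ} (L : List (Fin d)) (k : Fin d → ℕ) {f : Rd d → ℝ}
    (hf : ContDiff ℝ (⊤ : ℕ∞) f) : ContDiff ℝ (⊤ : ℕ∞) (DkList L k f) := by
  induction L with
  | nil => exact hf
  | cons j L ih => exact contDiff_pderivPow _ _ ih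

theorem tsupport_DkList {d : ℕ} (L : List (Fin d)) (k : Fin d → ℕ) (f : Rd d → ℝ) :
    tsupport (DkList L k f) ⊆ tsupport f := by
  induction L with
  | nil => exact subset_rfl
  | cons j L ih => exact (tsupport_pderivPow _ _ _).trans ih

theorem DkList_congr {d : ℕ} (L : List (Fin d)) {k k' : Fin d → ℕ} (f : Rd d → ℝ)
    (h : ∀ j ∈ L, k j = k' j) : DkList L k f = DkList L k' f := by
  induction L with
  | nil => rfl
  | cons j L ih =>
    rw [DkList_cons, DkList_cons, h j (by simp), ih fun i hi => h i (by simp [hi])]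

theorem pderiv1_DkList {d : ℕ} (L : List (Fin d)) (hL : L.Nodup) (k : Fin d → ℕ) (j : Fin d)
    (hj : j ∈ L) {f : Rd d → ℝ} (hf : ContDiff ℝ (⊤ : ℕ∞) f) :
    pderiv1 j (DkList L k f) = DkList L (Function.update k j (k j + 1)) f := by
  induction L with
  | nil => simp at hj
  | cons i L ih =>
    rw [List.nodup_cons] at hL
    rw [DkList_cons, DkList_cons]
    by_cases hij : j = i
    · subst hij
      rw [Function.update_self, DkList_congr L f (k := Function.update k j (k j + 1)) (k' := k)]
      · rfl
      · intro a ha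
        rw [Function.update_of_ne]
        rintro rfl
        exact hL.1 ha
    · have hj' : j ∈ L := by simpa [hij] using hj
      rw [pderiv1_pderivPow_comm _ _ _ (contDiff_DkList L k hf), ih hL.2 hj',
        Function.update_of_ne (Ne.symm hij)]

theorem pderiv1_Dk {d : ℕ} (k : Fin d → ℕ) (j : Fin d) {f : Rd d → ℝ}
    (hf : ContDiff ℝ (⊤ : ℕ∞) f) :
    pderiv1 j (Dk k f) = Dk (Function.update k j (k j + 1)) f := by
  rw [Dk_eq_DkList, Dk_eq_DkList,
    pderiv1_DkList _ (List.nodup_finRange d) k j (List.mem_finRange j) hf]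

theorem contDiff_Dk {d : ℕ} (k : Fin d → ℕ) {f : Rd d → ℝ} (hf : ContDiff ℝ (⊤ : ℕ∞) f) :
    ContDiff ℝ (⊤ : ℕ∞) (Dk k f) := by
  rw [Dk_eq_DkList]; exact contDiff_DkList _ k hf

theorem tsupport_Dk {d : ℕ} (k : Fin d → ℕ) (f : Rd d → ℝ) :
    tsupport (Dk k f) ⊆ tsupport f := by
  rw [Dk_eq_DkList]; exact tsupport_DkList _ k f

theorem wt_update {d : ℕ} (k : Fin d → ℕ) (j : Fin d) :
    wt (Function.update k j (k j + 1)) = wt k + 1 := by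
  unfold wt
  rw [Finset.sum_update_of_mem (Finset.mem_univ j),
    Finset.sum_eq_add_sum_sdiff_singleton_of_mem (Finset.mem_univ j) k]
  omega

theorem fderiv_eq_sum_pderiv1 {d : ℕ} (f : Rd d → ℝ) :
    fderiv ℝ f = fun y => ∑ j : Fin d,
      (ContinuousLinearMap.toSpanSingleton ℝ (EuclideanSpace.proj (𝕜 := ℝ) j : Rd d →L[ℝ] ℝ))
        (pderiv1 j f y) := by
  funext y
  ext v
  have hv : v = ∑ j : Fin d, v j • EuclideanSpace.single j (1 : ℝ) := by
    ext i
    simp [Finset.sum_apply, Pi.single_apply]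
  conv_lhs => rw [hv]
  simp [pderiv1, mul_comm]

/-- Norms of full derivatives are controlled by partial derivatives: writing `Df` as the sum of
the `∂_j f` times the coordinate forms, each order of differentiation costs a factor `d`. -/
theorem norm_iteratedFDeriv_Dk_le {d : ℕ} {f : Rd d → ℝ} (hf : ContDiff ℝ (⊤ : ℕ∞) f) (y : Rd d)
    (B : ℝ) (i : ℕ) (k : Fin d → ℕ)
    (h : ∀ k' : Fin d → ℕ, wt k' = wt k + i → |Dk k' f y| ≤ B) :
    ‖iteratedFDeriv ℝ i (Dk k f) y‖ ≤ (d : ℝ) ^ i * B := by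
  induction i generalizing k with
  | zero => simpa using h k rfl
  | succ i ih =>
    have hk := contDiff_Dk k hf
    rw [← norm_iteratedFDeriv_fderiv, fderiv_eq_sum_pderiv1,
      iteratedFDeriv_fun_sum_apply]
    · have hterm : ∀ j : Fin d, ‖iteratedFDeriv ℝ i (fun y =>
          (ContinuousLinearMap.toSpanSingleton ℝ
            (EuclideanSpace.proj (𝕜 := ℝ) j : Rd d →L[ℝ] ℝ)) (pderiv1 j (Dk k f) y)) y‖
          ≤ (d : ℝ) ^ i * B := by
        intro j
        have h1 := ContinuousLinearMap.norm_iteratedFDeriv_comp_left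
          (ContinuousLinearMap.toSpanSingleton ℝ
            (EuclideanSpace.proj (𝕜 := ℝ) j : Rd d →L[ℝ] ℝ))
          (contDiff_pderiv1 j hk).contDiffAt (x := y) (n := i) (by exact_mod_cast le_top)
        have h2 : ‖ContinuousLinearMap.toSpanSingleton ℝ
            (EuclideanSpace.proj (𝕜 := ℝ) j : Rd d →L[ℝ] ℝ)‖ ≤ 1 := by
          rw [ContinuousLinearMap.norm_toSpanSingleton]
          refine ContinuousLinearMap.opNorm_le_bound _ zero_le_one fun v => ?_
          rw [one_mul]
          exact PiLp.norm_apply_le v j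
        have h3 := ih (Function.update k j (k j + 1)) fun k' hk' => h k' (by
          rw [hk', wt_update]; omega)
        rw [← pderiv1_Dk k j hf] at h3
        refine h1.trans (le_trans ?_ h3)
        exact mul_le_of_le_one_left (norm_nonneg _) h2
      refine (norm_sum_le _ _).trans ((Finset.sum_le_sum fun j _ => hterm j).trans ?_)
      simp [pow_succ]
      linarith
    · intro j _
      exact ((ContinuousLinearMap.contDiff _).comp
        ((contDiff_pderiv1 j hk).of_le (by exact_mod_cast le_top))).contDiffAt

theorem norm_iteratedFDeriv_rescale_le {d : ℕ} {g : Rd d → ℝ} (hg : ContDiff ℝ (⊤ : ℕ∞) g)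
    (c l : ℝ) (hc : 0 ≤ c) (hl : 0 ≤ l) (i : ℕ) (z : Rd d) :
    ‖iteratedFDeriv ℝ i (fun z => c * g (-(l • z))) z‖
      ≤ c * (l ^ i * ‖iteratedFDeriv ℝ i g (-(l • z))‖) := by
  set A : Rd d →L[ℝ] Rd d := -(l • ContinuousLinearMap.id ℝ (Rd d)) with hA
  have hAn : ‖A‖ ≤ l := by
    rw [hA, norm_neg, norm_smul, Real.norm_of_nonneg hl]
    exact mul_le_of_le_one_right hl ContinuousLinearMap.norm_id_le
  have hgA : ContDiff ℝ (⊤ : ℕ∞) (g ∘ A) := hg.comp A.contDiff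
  have e : (fun z => c * g (-(l • z))) = c • (g ∘ A) := by
    funext z; simp [hA]
  rw [e, iteratedFDeriv_const_smul_apply (hgA.of_le (by exact_mod_cast le_top)).contDiffAt,
    norm_smul, Real.norm_of_nonneg hc,
    A.iteratedFDeriv_comp_right hg z (by exact_mod_cast le_top)]
  refine mul_le_mul_of_nonneg_left ?_ hc
  refine (ContinuousMultilinearMap.norm_compContinuousLinearMap_le _ _).trans ?_
  have e2 : A z = -(l • z) := by simp [hA]
  rw [e2, mul_comm]
  refine mul_le_mul_of_nonneg_right ?_ (norm_nonneg _)
  simp only [Finset.prod_const, Finset.card_univ, Fintype.card_fin]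
  exact pow_le_pow_left₀ (norm_nonneg _) hAn i

/-- If a distribution `η` vanishes at order `a` at `x` (tested against `B_r`), and `(K_n)` is
a dyadic family of kernels of order `β - d`, then `|η(D^k K_n(x-·))| ≲ 2^{(|k|-β-a)n}`,
with a constant depending only on `d`, `r`, `β` and `|k|`.  In particular the series
`Σ_n η(D^k K_n(x-·))` converges absolutely when `|k| < β + a`. -/
theorem distribution_against_dyadic_kernel
    (d r : ℕ) (hd : 1 ≤ d) (hr : 0 < r) (β : ℝ) (hβ : 0 < β) (k : Fin d → ℕ) :
    ∃ C'' : ℝ, 0 ≤ C'' ∧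
      ∀ (a : ℝ), -a < (r : ℝ) →
      ∀ (C Cbar : ℝ) (η : (Rd d → ℝ) →ₗ[ℝ] ℝ) (x : Rd d) (Kn : ℕ → Rd d → ℝ),
        IsDistribution η →
        (∀ φ ∈ Br d r, ∀ l : ℝ, 0 < l → l ≤ 1 → |η (scal φ x l)| ≤ C * l ^ a) →
        (∀ n, ContDiff ℝ (⊤ : ℕ∞) (Kn n)) →
        (∀ n, tsupport (Kn n) ⊆ Metric.closedBall 0 ((2 : ℝ)⁻¹ ^ n)) →
        (∀ n, ∀ k' : Fin d → ℕ, wt k' ≤ wt k + r → ∀ y : Rd d,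
          |Dk k' (Kn n) y| ≤ Cbar * (2 : ℝ) ^ ((n : ℝ) * ((d : ℝ) - β + (wt k' : ℝ)))) →
        (∀ n : ℕ, |η fun y => Dk k (Kn n) (x - y)| ≤
          C * Cbar * C'' * (2 : ℝ) ^ (((wt k : ℝ) - β - a) * (n : ℝ))) ∧
        ((wt k : ℝ) < β + a →
          Summable fun n : ℕ => |η fun y => Dk k (Kn n) (x - y)|) := by
  refine ⟨(d : ℝ) ^ r, by positivity, ?_⟩
  intro a ha C Cbar η x Kn hη hηB hK hKs hKb
  have hmain : ∀ n : ℕ, |η fun y => Dk k (Kn n) (x - y)| ≤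
      C * Cbar * (d : ℝ) ^ r * (2 : ℝ) ^ (((wt k : ℝ) - β - a) * (n : ℝ)) := by
    intro n
    have hCbar : 0 ≤ Cbar := by
      have h := (abs_nonneg _).trans (hKb n k (by omega) 0)
      exact nonneg_of_mul_nonneg_left h (by positivity)
    rcases hCbar.eq_or_lt with h0 | hpos
    · -- a vanishing `Cbar` forces the test function to vanish
      have hz : (fun y => Dk k (Kn n) (x - y)) = 0 := by
        funext y
        have h := hKb n k (by omega) (x - y)
        rw [← h0, zero_mul] at h
        exact abs_nonpos_iff.mp h
      rw [hz, map_zero, ← h0]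
      simp
    set l : ℝ := (2 : ℝ)⁻¹ ^ n with hl
    have hlpos : 0 < l := by positivity
    have hl1 : l ≤ 1 := pow_le_one₀ (by norm_num) (by norm_num)
    have hlr : l = (2 : ℝ) ^ (-(n : ℝ)) := by
      rw [hl, Real.rpow_neg (by norm_num), Real.rpow_natCast, inv_pow]
    have hd1 : (1 : ℝ) ≤ d := by exact_mod_cast hd
    set M : ℝ := (d : ℝ) ^ r * Cbar * (2 : ℝ) ^ ((n : ℝ) * ((wt k : ℝ) - β)) with hM
    have hMpos : 0 < M := by positivity
    set φ : Rd d → ℝ := fun z => (M⁻¹ * l ^ d) * Dk k (Kn n) (-(l • z)) with hφ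
    have hD := contDiff_Dk k (hK n)
    have hφB : φ ∈ Br d r := by
      refine ⟨?_, ?_, ?_⟩
      · have : ContDiff ℝ (⊤ : ℕ∞) φ :=
          contDiff_const.mul (hD.comp (contDiff_id.const_smul l).neg)
        exact this.of_le (by exact_mod_cast le_top)
      · refine closure_minimal (fun z hz => ?_) isClosed_closedBall
        have h1 : Dk k (Kn n) (-(l • z)) ≠ 0 := fun h => hz (by simp [hφ, h])
        have h2 := hKs n (tsupport_Dk k _ (subset_tsupport _ h1))
        rw [mem_closedBall_zero_iff, norm_neg, norm_smul, Real.norm_of_nonneg hlpos.le] at h2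
        rw [mem_closedBall_zero_iff]
        exact le_of_mul_le_mul_left (by rwa [mul_one]) hlpos
      · intro i hi z
        have h1 := norm_iteratedFDeriv_rescale_le hD (M⁻¹ * l ^ d) l (by positivity) hlpos.le i z
        have h2 := norm_iteratedFDeriv_Dk_le (hK n) (-(l • z))
          (Cbar * (2 : ℝ) ^ ((n : ℝ) * ((d : ℝ) - β + ((wt k : ℝ) + i)))) i k (by
            intro k' hk'
            have := hKb n k' (by omega) (-(l • z))
            rwa [hk', Nat.cast_add] at this)
        -- the powers of two combine to the one contained in `M`
        have h3 : l ^ d * (l ^ i * (2 : ℝ) ^ ((n : ℝ) * ((d : ℝ) - β + ((wt k : ℝ) + i))))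
            = (2 : ℝ) ^ ((n : ℝ) * ((wt k : ℝ) - β)) := by
          rw [hlr, ← Real.rpow_mul_natCast (by norm_num), ← Real.rpow_mul_natCast (by norm_num),
            ← Real.rpow_add (by norm_num), ← Real.rpow_add (by norm_num)]
          congr 1
          ring
        calc ‖iteratedFDeriv ℝ i φ z‖
            ≤ (M⁻¹ * l ^ d) * (l ^ i * ‖iteratedFDeriv ℝ i (Dk k (Kn n)) (-(l • z))‖) := h1
          _ ≤ (M⁻¹ * l ^ d) * (l ^ i * ((d : ℝ) ^ i * (Cbar *
                (2 : ℝ) ^ ((n : ℝ) * ((d : ℝ) - β + ((wt k : ℝ) + i)))))) := by gcongr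
          _ = M⁻¹ * ((d : ℝ) ^ i * Cbar * (l ^ d * (l ^ i *
                (2 : ℝ) ^ ((n : ℝ) * ((d : ℝ) - β + ((wt k : ℝ) + i)))))) := by ring
          _ = M⁻¹ * ((d : ℝ) ^ i * Cbar * (2 : ℝ) ^ ((n : ℝ) * ((wt k : ℝ) - β))) := by rw [h3]
          _ ≤ M⁻¹ * ((d : ℝ) ^ r * Cbar * (2 : ℝ) ^ ((n : ℝ) * ((wt k : ℝ) - β))) := by
                gcongr
          _ = 1 := inv_mul_cancel₀ hMpos.ne'
    have hscal : (fun y => Dk k (Kn n) (x - y)) = M • scal φ x l := by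
      funext y
      have e : -(l • l⁻¹ • (y - x)) = x - y := by
        rw [smul_inv_smul₀ hlpos.ne', neg_sub]
      simp only [Pi.smul_apply, smul_eq_mul, scal, hφ, e]
      field_simp
    have hb := hηB φ hφB l hlpos hl1
    rw [hscal, map_smul, smul_eq_mul, abs_mul, abs_of_pos hMpos]
    refine (mul_le_mul_of_nonneg_left hb hMpos.le).trans (le_of_eq ?_)
    have h4 : (2 : ℝ) ^ ((n : ℝ) * ((wt k : ℝ) - β)) * l ^ a
        = (2 : ℝ) ^ (((wt k : ℝ) - β - a) * (n : ℝ)) := by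
      rw [hlr, ← Real.rpow_mul (by norm_num), ← Real.rpow_add (by norm_num)]
      congr 1
      ring
    rw [← h4, hM]
    ring
  refine ⟨hmain, fun hlt => ?_⟩
  refine Summable.of_nonneg_of_le (fun _ => abs_nonneg _) hmain (Summable.mul_left _ ?_)
  have : (fun n : ℕ => (2 : ℝ) ^ (((wt k : ℝ) - β - a) * (n : ℝ)))
      = fun n : ℕ => ((2 : ℝ) ^ ((wt k : ℝ) - β - a)) ^ n := by
    funext n
    rw [Real.rpow_mul_natCast (by norm_num)]
  rw [this]
  exact summable_geometric_of_lt_one (by positivity)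
    (Real.rpow_lt_one_of_one_lt_of_neg (by norm_num) (by linarith))
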